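/- arXiv:cond-mat/0209627 — 5 statements merged into one kernel-verified Lean document; each statement's English description precedes it below -/
import Mathlib

section
/- Let n ≥ 1 and let A, B ∈ M_n(ℂ) be Hermitian matrices. Then the function of a real variable x ↦ log(Re Tr exp(A + x • B)) is convex on ℝ. -/
/-!
For a Hermitian matrix `X` and a unitary `U`, write `d_U(X)` for the diagonal of `U X Uᴴ`. Since
`d_U(X)` is the image of the eigenvalues of `X` under the doubly stochastic matrix of squared
moduli of the entries of a unitary, Jensen's inequality gives Peierls' inequality
`∑ᵢ exp d_U(X)ᵢ ≤ Tr exp X`, with equality when `U` diagonalizes `X`. Hence `log Tr exp X` is the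
maximum over `U` of the log-sum-exp of `d_U(X)`, a convex function of a vector that depends
linearly on `X`.
-/

theorem convexOn_of_forall_exists_le {R E β : Type*} [Semiring R] [PartialOrder R]
    [AddCommMonoid E] [SMul R E] [AddCommMonoid β] [PartialOrder β] [IsOrderedAddMonoid β]
    [SMul R β] [PosSMulMono R β] {s : Set E} {f : E → β} (hs : Convex R s)
    (h : ∀ x ∈ s, ∃ g : E → β, ConvexOn R s g ∧ (∀ y ∈ s, g y ≤ f y) ∧ f x ≤ g x) :
    ConvexOn R s f := by
  refine ⟨hs, fun x hx y hy a b ha hb hab => ?_⟩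
  obtain ⟨g, hg, hgf, hfg⟩ := h _ (hs hx hy ha hb hab)
  calc f (a • x + b • y) ≤ g (a • x + b • y) := hfg
    _ ≤ a • g x + b • g y := hg.2 hx hy ha hb hab
    _ ≤ a • f x + b • f y :=
        add_le_add (smul_le_smul_of_nonneg_left (hgf x hx) ha)
          (smul_le_smul_of_nonneg_left (hgf y hy) hb)

theorem convexOn_log_sum_exp {ι : Type*} {s : Finset ι} (hs : s.Nonempty) :
    ConvexOn ℝ Set.univ fun x : ι → ℝ => Real.log (∑ i ∈ s, Real.exp (x i)) := by
  have sum_pos (x : ι → ℝ) : 0 < ∑ i ∈ s, Real.exp (x i) :=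
    Finset.sum_pos (fun i _ => Real.exp_pos _) hs
  refine convexOn_iff_forall_pos.2 ⟨convex_univ, fun x _ y _ a b ha hb hab => ?_⟩
  have exp_mul_rpow_inv {c : ℝ} (hc : 0 < c) (t : ℝ) : Real.exp (c * t) ^ c⁻¹ = Real.exp t := by
    rw [← Real.exp_mul, mul_right_comm, mul_inv_cancel₀ hc.ne', one_mul]
  have holder : ∑ i ∈ s, Real.exp ((a • x + b • y) i) ≤
      (∑ i ∈ s, Real.exp (x i)) ^ a * (∑ i ∈ s, Real.exp (y i)) ^ b := by
    simpa only [exp_mul_rpow_inv ha, exp_mul_rpow_inv hb, one_div, inv_inv, ← Real.exp_add] using!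
      Real.inner_le_Lp_mul_Lq_of_nonneg s (Real.HolderConjugate.inv_inv ha hb hab)
        (f := fun i => Real.exp (a * x i)) (g := fun i => Real.exp (b * y i))
        (fun i _ => (Real.exp_pos _).le) (fun i _ => (Real.exp_pos _).le)
  calc Real.log (∑ i ∈ s, Real.exp ((a • x + b • y) i))
      ≤ Real.log ((∑ i ∈ s, Real.exp (x i)) ^ a * (∑ i ∈ s, Real.exp (y i)) ^ b) :=
        Real.log_le_log (sum_pos _) holder
    _ = a • Real.log (∑ i ∈ s, Real.exp (x i)) + b • Real.log (∑ i ∈ s, Real.exp (y i)) := by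
        rw [Real.log_mul (Real.rpow_pos_of_pos (sum_pos x) a).ne'
          (Real.rpow_pos_of_pos (sum_pos y) b).ne', Real.log_rpow (sum_pos x),
          Real.log_rpow (sum_pos y), smul_eq_mul, smul_eq_mul]

section

open Matrix NormedSpace

variable {m 𝕜 : Type*} [RCLike 𝕜]

/-- The real part of the diagonal of a matrix, as a real-linear map. On Hermitian matrices it is the
diagonal itself; it turns trace inequalities into inequalities between real vectors. -/
noncomputable def reDiag : Matrix m m 𝕜 →ₗ[ℝ] m → ℝ :=
  RCLike.reLm.compLeft m ∘ₗ diagLinearMap m ℝ 𝕜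

variable [DecidableEq m]

theorem reDiag_diagonal_ofReal (d : m → ℝ) :
    reDiag (diagonal (RCLike.ofReal ∘ d : m → 𝕜)) = d := by
  ext i
  exact (congrArg RCLike.re (diagonal_apply_eq _ i)).trans (RCLike.ofReal_re _)

variable [Fintype m]

theorem sum_map_mulVec_le_of_mem_doublyStochastic {R : Type*} [Field R] [LinearOrder R]
    [IsStrictOrderedRing R] {M : Matrix m m R} (hM : M ∈ doublyStochastic R m) {s : Set R}
    {f : R → R} (hf : ConvexOn R s f) {x : m → R} (hx : ∀ i, x i ∈ s) :
    ∑ i, f ((M *ᵥ x) i) ≤ ∑ i, f (x i) :=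
  calc ∑ i, f ((M *ᵥ x) i) ≤ ∑ i, (M *ᵥ (f ∘ x)) i :=
        Finset.sum_le_sum fun i _ => hf.map_sum_le (fun _ _ => nonneg_of_mem_doublyStochastic hM)
          (sum_row_of_mem_doublyStochastic hM i) fun j _ => hx j
    _ = ∑ i, f (x i) := sum_mulVec_of_mem_doublyStochastic hM

theorem map_norm_sq_mem_doublyStochastic (U : unitaryGroup m 𝕜) :
    (U : Matrix m m 𝕜).map (‖·‖ ^ 2) ∈ doublyStochastic ℝ m := by
  have row_sum (V : unitaryGroup m 𝕜) (i : m) : ∑ j, ‖(V : Matrix m m 𝕜) i j‖ ^ 2 = 1 := by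
    have h : ((V : Matrix m m 𝕜) * star (V : Matrix m m 𝕜)) i i = 1 := by
      rw [mem_unitaryGroup_iff.1 V.2, one_apply_eq]
    simp only [mul_apply, star_apply, RCLike.star_def, RCLike.mul_conj] at h
    exact_mod_cast h
  refine mem_doublyStochastic_iff_sum.2 ⟨fun i j => sq_nonneg _, row_sum U, fun j => ?_⟩
  simpa only [Unitary.coe_star, star_apply, norm_star] using! row_sum (star U) j

theorem reDiag_conjStarAlgAut_diagonal (U : unitaryGroup m 𝕜) (d : m → ℝ) :
    reDiag (Unitary.conjStarAlgAut 𝕜 _ U (diagonal (RCLike.ofReal ∘ d))) =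
      (U : Matrix m m 𝕜).map (‖·‖ ^ 2) *ᵥ d := by
  ext i
  calc RCLike.re (((U : Matrix m m 𝕜) * diagonal (RCLike.ofReal ∘ d) * star (U : Matrix m m 𝕜) :
        Matrix m m 𝕜) i i)
      = ∑ j, RCLike.re ((U : Matrix m m 𝕜) i j * d j * star ((U : Matrix m m 𝕜) i j)) := by
        simp only [mul_apply (M := _ * _), mul_diagonal, star_apply, map_sum, Function.comp_apply]
    _ = ∑ j, ‖(U : Matrix m m 𝕜) i j‖ ^ 2 * d j := by
        refine Finset.sum_congr rfl fun j _ => ?_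
        rw [mul_right_comm, RCLike.star_def, RCLike.mul_conj]
        norm_cast

theorem sum_map_reDiag_le_sum_map_eigenvalues {X : Matrix m m 𝕜} (hX : X.IsHermitian)
    {s : Set ℝ} {f : ℝ → ℝ} (hf : ConvexOn ℝ s f) (hs : ∀ i, hX.eigenvalues i ∈ s) :
    ∑ i, f (reDiag X i) ≤ ∑ i, f (hX.eigenvalues i) := by
  have h : reDiag X = (hX.eigenvectorUnitary : Matrix m m 𝕜).map (‖·‖ ^ 2) *ᵥ hX.eigenvalues := by
    rw [← reDiag_conjStarAlgAut_diagonal, ← hX.spectral_theorem]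
  rw [h]
  exact sum_map_mulVec_le_of_mem_doublyStochastic (map_norm_sq_mem_doublyStochastic _) hf hs

theorem trace_exp_conjStarAlgAut (U : unitaryGroup m 𝕜) (X : Matrix m m 𝕜) :
    trace (exp (Unitary.conjStarAlgAut 𝕜 _ U X)) = trace (exp X) :=
  calc trace (exp (Unitary.conjStarAlgAut 𝕜 _ U X))
      = trace ((U : Matrix m m 𝕜) * exp X * star (U : Matrix m m 𝕜)) :=
        congrArg trace (exp_units_conj (Unitary.toUnits U) X)
    _ = trace (exp X) := by
        rw [trace_mul_cycle, Unitary.coe_star_mul_self, one_mul]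

theorem trace_exp_diagonal_ofReal (d : m → ℝ) :
    trace (exp (diagonal (RCLike.ofReal ∘ d : m → 𝕜))) = (∑ i, Real.exp (d i) : ℝ) := by
  rw [exp_diagonal, trace_diagonal, RCLike.ofReal_sum]
  refine Finset.sum_congr rfl fun i _ => ?_
  rw [Pi.coe_exp, Function.comp_apply, Real.exp_eq_exp_ℝ, ← RCLike.algebraMap_eq_ofReal,
    algebraMap_exp_comm]

theorem trace_exp_eq_sum_exp_eigenvalues {X : Matrix m m 𝕜} (hX : X.IsHermitian) :
    trace (exp X) = (∑ i, Real.exp (hX.eigenvalues i) : ℝ) := by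
  conv_lhs => rw [hX.spectral_theorem, trace_exp_conjStarAlgAut, trace_exp_diagonal_ofReal]

theorem sum_exp_reDiag_le_re_trace_exp {X : Matrix m m 𝕜} (hX : X.IsHermitian) :
    ∑ i, Real.exp (reDiag X i) ≤ RCLike.re (trace (exp X)) := by
  rw [trace_exp_eq_sum_exp_eigenvalues hX, RCLike.ofReal_re]
  exact sum_map_reDiag_le_sum_map_eigenvalues hX convexOn_exp fun _ => Set.mem_univ _

theorem log_trace_exp_convexOn_general [Nonempty m] :
    ConvexOn ℝ {X : Matrix m m 𝕜 | X.IsHermitian}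
      fun X => Real.log (RCLike.re (trace (exp X))) := by
  have convex_isHermitian : Convex ℝ {X : Matrix m m 𝕜 | X.IsHermitian} :=
    (selfAdjoint.submodule ℝ (Matrix m m 𝕜)).convex
  refine convexOn_of_forall_exists_le convex_isHermitian fun X (hX : X.IsHermitian) => ?_
  let φ := Unitary.conjStarAlgAut 𝕜 (Matrix m m 𝕜) (star hX.eigenvectorUnitary)
  refine ⟨fun Y => Real.log (∑ i, Real.exp (reDiag (φ Y) i)), ?_, fun Y hY => ?_, ?_⟩
  · exact ((convexOn_log_sum_exp Finset.univ_nonempty).comp_linearMap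
      (reDiag ∘ₗ φ.toAlgEquiv.toLinearMap.restrictScalars ℝ)).subset
        (Set.subset_univ _) convex_isHermitian
  · rw [← trace_exp_conjStarAlgAut (star hX.eigenvectorUnitary) Y]
    exact Real.log_le_log (Finset.sum_pos (fun i _ => Real.exp_pos _) Finset.univ_nonempty)
      (sum_exp_reDiag_le_re_trace_exp (IsSelfAdjoint.map hY φ))
  · have h : reDiag (φ X) = hX.eigenvalues := by
      rw [hX.conjStarAlgAut_star_eigenvectorUnitary, reDiag_diagonal_ofReal]
    simp only [h, trace_exp_eq_sum_exp_eigenvalues hX, RCLike.ofReal_re, le_refl]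

end

open NormedSpace in
/-- For `n ≥ 1` and Hermitian matrices `A, B ∈ M_n(ℂ)`, the function
`x ↦ log (Re Tr exp (A + x • B))` is convex on all of `ℝ`. -/
theorem log_trace_exp_convexOn (n : ℕ) (hn : 1 ≤ n)
    (A B : Matrix (Fin n) (Fin n) ℂ) (hA : A.IsHermitian) (hB : B.IsHermitian) :
    ConvexOn ℝ Set.univ
      (fun x : ℝ => Real.log (Matrix.trace (exp (A + x • B))).re) := by
  have := Fin.pos_iff_nonempty.mp hn
  exact (((log_trace_exp_convexOn_general (𝕜 := ℂ)).translate_right A).comp_linearMap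
    (.toSpanSingleton ℝ _ B)).subset (fun x _ => hA.add (hB.smul (.all x))) convex_univ
end

section
/- Let A, B ∈ M_n(ℂ) be arbitrary square complex matrices. Then for every real x, the function x ↦ Tr exp(A + x • B) has derivative Tr(exp(A + x • B) · B) at x; that is, HasDerivAt (fun x : ℝ => (Matrix.exp (A + x • B)).trace) ((Matrix.exp (A + x • B) * B).trace) x. -/
/-!
Since `exp a = exp (a / (n + 1)) ^ (n + 1)`, the Leibniz rule and cyclicity of a tracial map `T`
give `T (exp' a b) = T (exp (n a / (n + 1)) * exp' (a / (n + 1)) b)`. As `exp'` is continuous and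
`exp' 0` is the identity, letting `n → ∞` yields `T (exp' a b) = T (exp a * b)`: under `T`, the
exponential is differentiated as if `a` and `b` commuted.
-/

open Filter NormedSpace
open scoped Topology

/-- A *tracial* map takes the same value on `a * b` and `b * a`, like the trace of a matrix. No
linearity is included, so that the notion applies to bundled maps of any kind. -/
def IsTracial {M α : Type*} [Mul M] (T : M → α) : Prop :=
  ∀ a b, T (a * b) = T (b * a)

namespace IsTracial

section Pow

variable {𝕜 E 𝔸 G Φ : Type*} [NontriviallyNormedField 𝕜] [NormedAddCommGroup E] [NormedSpace 𝕜 E]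
  [NormedRing 𝔸] [NormedAlgebra 𝕜 𝔸] [AddCommMonoid G] [FunLike Φ 𝔸 G] [AddMonoidHomClass Φ 𝔸 G]
  {T : Φ} {f : E → 𝔸} {x : E}

theorem map_fderiv_pow (hT : IsTracial T) (hf : DifferentiableAt 𝕜 f x) (n : ℕ) (v : E) :
    T (fderiv 𝕜 (f ^ n) x v) = n • T (f x ^ (n - 1) * fderiv 𝕜 f x v) := by
  have map_summand : ∀ i ∈ Finset.range n,
      T (f x ^ (n.pred - i) * fderiv 𝕜 f x v * f x ^ i) =
        T (f x ^ (n - 1) * fderiv 𝕜 f x v) := fun i hi => by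
    have add_pred_sub : i + (n.pred - i) = n - 1 :=
      Nat.add_sub_cancel' (Nat.le_pred_of_lt (Finset.mem_range.1 hi))
    rw [hT, ← mul_assoc, ← pow_add, add_pred_sub]
  rw [fderiv_pow' n hf]
  simpa using Finset.sum_congr rfl map_summand

end Pow

section Exp

variable {𝕜 𝔸 F : Type*} [RCLike 𝕜] [NormedRing 𝔸] [NormedAlgebra 𝕜 𝔸] [CompleteSpace 𝔸]
  [NormedAddCommGroup F] [NormedSpace 𝕜 F] {T : 𝔸 →L[𝕜] F}

theorem map_fderiv_exp_eq_div_succ (hT : IsTracial T) (a b : 𝔸) (n : ℕ) :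
    T (fderiv 𝕜 exp a b) =
      T (exp (((n : 𝕜) / (n + 1)) • a) * fderiv 𝕜 exp ((1 / ((n : 𝕜) + 1)) • a) b) := by
  let : NormedAlgebra ℚ 𝔸 := .restrictScalars ℚ 𝕜 𝔸
  set c : 𝕜 := 1 / ((n : 𝕜) + 1) with hc
  have hn : (n : 𝕜) + 1 ≠ 0 := n.cast_add_one_ne_zero
  have exp_eq_pow : (exp : 𝔸 → 𝔸) = (fun y => exp (c • y)) ^ (n + 1) := by
    funext y
    rw [Pi.pow_apply, ← exp_nsmul, ← Nat.cast_smul_eq_nsmul 𝕜, smul_smul, Nat.cast_succ, hc,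
      mul_one_div_cancel hn, one_smul]
  have exp_pow : exp (c • a) ^ n = exp (((n : 𝕜) / (n + 1)) • a) := by
    rw [← exp_nsmul, ← Nat.cast_smul_eq_nsmul 𝕜, smul_smul, hc, mul_one_div]
  have hd : DifferentiableAt 𝕜 (fun y : 𝔸 => exp (c • y)) a :=
    (exp_analytic (c • a)).differentiableAt.comp a (differentiableAt_id.const_smul c)
  calc T (fderiv 𝕜 exp a b)
      = (n + 1) • T (exp (c • a) ^ n * fderiv 𝕜 (fun y => exp (c • y)) a b) := by
        conv_lhs => rw [exp_eq_pow]
        exact hT.map_fderiv_pow hd (n + 1) b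
    _ = (n + 1) • T (exp (c • a) ^ n * c • fderiv 𝕜 exp (c • a) b) := by
        rw [fderiv_comp_smul, smul_apply]
    _ = T (exp (((n : 𝕜) / (n + 1)) • a) * fderiv 𝕜 exp (c • a) b) := by
        rw [exp_pow, mul_smul_comm, map_smul, ← Nat.cast_smul_eq_nsmul 𝕜, smul_smul,
          Nat.cast_succ, hc, mul_one_div_cancel hn, one_smul]

theorem map_fderiv_exp (hT : IsTracial T) (a b : 𝔸) :
    T (fderiv 𝕜 exp a b) = T (exp a * b) := by
  let : NormedAlgebra ℚ 𝔸 := .restrictScalars ℚ 𝕜 𝔸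
  have tendsto_exp : Tendsto (fun n : ℕ => exp (((n : 𝕜) / (n + 1)) • a)) atTop (𝓝 (exp a)) := by
    simpa using ((tendsto_natCast_div_add_atTop (1 : 𝕜)).smul_const a).exp
  have tendsto_fderiv :
      Tendsto (fun n : ℕ => fderiv 𝕜 exp ((1 / ((n : 𝕜) + 1)) • a) b) atTop (𝓝 b) := by
    have continuousAt_fderiv : ContinuousAt (fun y : 𝔸 => fderiv 𝕜 exp y b) 0 :=
      (exp_analytic (0 : 𝔸)).fderiv.continuousAt.clm_apply continuousAt_const
    have fderiv_zero : fderiv 𝕜 exp (0 : 𝔸) b = b := by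
      rw [hasFDerivAt_exp_zero.fderiv, one_apply_eq_self]
    have tendsto_zero : Tendsto (fun n : ℕ => (1 / ((n : 𝕜) + 1)) • a) atTop (𝓝 0) := by
      simpa using (tendsto_one_div_add_atTop_nhds_zero_nat (𝕜 := 𝕜)).smul_const a
    simpa only [fderiv_zero, Function.comp_def] using continuousAt_fderiv.tendsto.comp tendsto_zero
  refine tendsto_nhds_unique ?_ ((T.continuous.tendsto _).comp (tendsto_exp.mul tendsto_fderiv))
  exact tendsto_const_nhds.congr (hT.map_fderiv_exp_eq_div_succ a b)

theorem hasStrictFDerivAt_map_exp (hT : IsTracial T) (a : 𝔸) :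
    HasStrictFDerivAt (fun y => T (exp y)) (T ∘L ContinuousLinearMap.mul 𝕜 𝔸 (exp a)) a :=
  (T.hasStrictFDerivAt.comp a (exp_analytic a).hasStrictFDerivAt).congr_fderiv <|
    ContinuousLinearMap.ext (hT.map_fderiv_exp a)

theorem hasStrictDerivAt_map_exp_add_smul (hT : IsTracial T) (a b : 𝔸) (x : 𝕜) :
    HasStrictDerivAt (fun x : 𝕜 => T (exp (a + x • b))) (T (exp (a + x • b) * b)) x := by
  have line : HasStrictDerivAt (fun x : 𝕜 => a + x • b) b x := by
    simpa using ((hasStrictDerivAt_id x).smul_const b).const_add a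
  exact (hT.hasStrictFDerivAt_map_exp _).comp_hasStrictDerivAt x line

end Exp

end IsTracial

theorem hasDerivAt_trace_exp_general {𝕜 R m : Type*} [RCLike 𝕜] [NormedCommRing R]
    [NormedAlgebra 𝕜 R] [CompleteSpace R] [Fintype m] [DecidableEq m] (A B : Matrix m m R)
    (x : 𝕜) :
    HasDerivAt (fun x : 𝕜 => Matrix.trace (exp (A + x • B)))
      (Matrix.trace (exp (A + x • B) * B)) x := by
  open scoped Matrix.Norms.Operator in
  -- The uniformity of the operator norm agrees with the entrywise one only after unfolding
  -- both, which instance search does not do.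
  have : @CompleteSpace (Matrix m m R) PseudoMetricSpace.toUniformSpace :=
    inferInstanceAs (CompleteSpace (m → m → R))
  let T : Matrix m m R →L[𝕜] R := ⟨Matrix.traceLinearMap m 𝕜 R, continuous_id.matrix_trace⟩
  have hT : IsTracial T := Matrix.trace_mul_comm
  exact (hT.hasStrictDerivAt_map_exp_add_smul A B x).hasDerivAt

open NormedSpace in
/-- For arbitrary `A, B ∈ M_n(ℂ)` and every real `x`, the function
`x ↦ Tr exp (A + x • B)` has derivative `Tr (exp (A + x • B) * B)` at `x`. -/
theorem hasDerivAt_trace_exp {n : ℕ} (A B : Matrix (Fin n) (Fin n) ℂ) (x : ℝ) :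
    HasDerivAt (fun x : ℝ => Matrix.trace (exp (A + x • B)))
      (Matrix.trace (exp (A + x • B) * B)) x :=
  hasDerivAt_trace_exp_general A B x
end

section
/- Let H, P ∈ M_n(ℂ) be arbitrary square complex matrices, β, t real. Define Ṗ := i • (H·P − P·H), Ṗ(t) := exp((i t) • H) · Ṗ · exp(−(i t) • H), and Ṗ(−iλ) := exp(λ • H) · Ṗ · exp(−λ • H) for real λ (with i = Complex.I and real scalars coerced to ℂ). Then i · Tr( exp(−β • H) · ( Ṗ(t)·P − P·Ṗ(t) ) ) = ∫_{λ=0}^{β} Tr( exp(−β • H) · Ṗ(−iλ) · Ṗ(t) ) dλ. -/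
/-!
Since `d/ds (e^{sH} P e^{-sH}) = e^{sH} [H, P] e^{-sH}`, the fundamental theorem of calculus gives
Kubo's identity `e^{-βH} ∫₀^β e^{sH} [H, P] e^{-sH} ds = [P, e^{-βH}]`. Multiply on the right
by `Q` and apply a trace `φ`: cyclicity turns `φ ([P, e^{-βH}] Q)` into `φ (e^{-βH} [Q, P])`.
The KMS identity is the case `Q = Ṗ(t)`, with `iP` in place of `P`.
-/

open NormedSpace

theorem map_lie_mul_of_map_mul_comm {A E F : Type*} [NonUnitalRing A] [AddGroup E]
    [FunLike F A E] [AddMonoidHomClass F A E] (φ : F) (hφ : ∀ x y, φ (x * y) = φ (y * x))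
    (x y z : A) : φ (⁅x, y⁆ * z) = φ (y * ⁅z, x⁆) := by
  simp only [Ring.lie_def, sub_mul, mul_sub, map_sub, mul_assoc, hφ x (y * z)]

section expConj

/-- The conjugate `e^{zH} X e^{-zH}`: the evolution of the observable `X` under the Hamiltonian `H`,
at the complex time `-iz` in units with `ħ = 1`. -/
noncomputable def expConj {𝕂 A : Type*} [Ring 𝕂] [Ring A] [TopologicalSpace A]
    [IsTopologicalRing A] [Module 𝕂 A] (H : A) (z : 𝕂) (X : A) : A :=
  exp (z • H) * X * exp (-z • H)

variable {𝕂 A : Type*} [RCLike 𝕂] [NormedRing A] [NormedAlgebra 𝕂 A] [CompleteSpace A]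

theorem exp_neg_smul_mul_exp_smul (H : A) (z : 𝕂) : exp (-z • H) * exp (z • H) = 1 := by
  let _ : NormedAlgebra ℚ A := NormedAlgebra.restrictScalars ℚ 𝕂 A
  rw [neg_smul, ← exp_add_of_commute (Commute.refl (z • H)).neg_left, neg_add_cancel, exp_zero]

theorem hasDerivAt_expConj (H X : A) (z : 𝕂) :
    HasDerivAt (fun w : 𝕂 ↦ expConj H w X) (expConj H z ⁅H, X⁆) z := by
  have hleft : HasDerivAt (fun w : 𝕂 ↦ exp (w • H)) (exp (z • H) * H) z :=
    hasDerivAt_exp_smul_const H z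
  have hright : HasDerivAt (fun w : 𝕂 ↦ exp (-w • H)) (-(H * exp (-z • H))) z := by
    simpa [Function.comp_def] using
      (hasDerivAt_exp_smul_const' H (-z)).scomp z (hasDerivAt_neg z)
  refine ((hleft.mul_const X).mul hright).congr_deriv ?_
  rw [expConj, Ring.lie_def]
  noncomm_ring

theorem continuous_expConj (H X : A) : Continuous fun z : 𝕂 ↦ expConj H z X :=
  continuous_iff_continuousAt.2 fun z ↦ (hasDerivAt_expConj H X z).continuousAt

end expConj

section Kubo

variable {A : Type*} [NormedRing A] [NormedAlgebra ℝ A] [CompleteSpace A]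

theorem integral_expConj_lie (H X : A) (a b : ℝ) :
    ∫ s in a..b, expConj H s ⁅H, X⁆ = expConj H b X - expConj H a X :=
  intervalIntegral.integral_eq_sub_of_hasDerivAt (fun s _ ↦ hasDerivAt_expConj H X s)
    ((continuous_expConj H ⁅H, X⁆).intervalIntegrable a b)

theorem exp_neg_smul_mul_integral_expConj_lie (H X : A) (β : ℝ) :
    exp (-β • H) * ∫ s in 0..β, expConj H s ⁅H, X⁆ = ⁅X, exp (-β • H)⁆ := by
  have hβ : exp (-β • H) * expConj H β X = X * exp (-β • H) := by
    rw [expConj, ← mul_assoc, ← mul_assoc, exp_neg_smul_mul_exp_smul, one_mul]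
  have hzero : expConj H (0 : ℝ) X = X := by simp [expConj]
  rw [integral_expConj_lie, mul_sub, hβ, hzero, Ring.lie_def]

theorem trace_KMS_identity_general {E : Type*} [NormedAddCommGroup E] [NormedSpace ℝ E]
    [CompleteSpace E] (φ : A →L[ℝ] E) (hφ : ∀ x y, φ (x * y) = φ (y * x)) (H P Q : A) (β : ℝ) :
    φ (exp (-β • H) * ⁅Q, P⁆) = ∫ s in 0..β, φ (exp (-β • H) * expConj H s ⁅H, P⁆ * Q) := by
  let L : A →L[ℝ] E := φ ∘L ContinuousLinearMap.mulLeftRight ℝ A (exp (-β • H)) Q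
  have hint : IntervalIntegrable (fun s : ℝ ↦ expConj H s ⁅H, P⁆) MeasureTheory.volume 0 β :=
    (continuous_expConj H ⁅H, P⁆).intervalIntegrable 0 β
  calc φ (exp (-β • H) * ⁅Q, P⁆)
      = φ (⁅P, exp (-β • H)⁆ * Q) := (map_lie_mul_of_map_mul_comm φ hφ _ _ _).symm
    _ = L (∫ s in 0..β, expConj H s ⁅H, P⁆) := by
        rw [← exp_neg_smul_mul_integral_expConj_lie]; rfl
    _ = ∫ s in 0..β, φ (exp (-β • H) * expConj H s ⁅H, P⁆ * Q) :=
        (L.intervalIntegral_comp_comm hint).symm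

end Kubo

attribute [local instance] Matrix.linftyOpNormedRing Matrix.linftyOpNormedAlgebra in
theorem trace_exp_neg_smul_mul_lie {ι 𝕂 : Type*} [Fintype ι] [DecidableEq ι] [RCLike 𝕂]
    (H P Q : Matrix ι ι 𝕂) (β : ℝ) :
    (exp (-β • H) * ⁅Q, P⁆).trace =
      ∫ s in 0..β, (exp (-β • H) * expConj H s ⁅H, P⁆ * Q).trace :=
  trace_KMS_identity_general (LinearMap.toContinuousLinearMap (Matrix.traceLinearMap ι ℝ 𝕂))
    Matrix.trace_mul_comm H P Q β

open NormedSpace Complex in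
/-- The Kubo–Martin–Schwinger identity (Eq. (38) of the paper, `ħ = 1`): with
`Ṗ = i[H,P]`, `Ṗ(t) = e^{itH} Ṗ e^{-itH}` and `Ṗ(-iλ) = e^{λH} Ṗ e^{-λH}`,
`i Tr(e^{-βH} [Ṗ(t), P]) = ∫_0^β Tr(e^{-βH} Ṗ(-iλ) Ṗ(t)) dλ`. -/
theorem trace_KMS_identity {n : ℕ} (H P : Matrix (Fin n) (Fin n) ℂ) (β t : ℝ) :
    let Pdot : Matrix (Fin n) (Fin n) ℂ := I • (H * P - P * H)
    let Pdot_t : Matrix (Fin n) (Fin n) ℂ :=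
      exp ((I * t) • H) * Pdot * exp ((-(I * t)) • H)
    I * Matrix.trace (exp ((-(β : ℂ)) • H) * (Pdot_t * P - P * Pdot_t))
      = ∫ l in (0:ℝ)..β,
          Matrix.trace (exp ((-(β : ℂ)) • H) *
            (exp ((l : ℂ) • H) * Pdot * exp ((-(l : ℂ)) • H)) * Pdot_t) := by
  intro Pdot Pdot_t
  simpa [expConj, Ring.lie_def, ← smul_sub, Pdot] using
    trace_exp_neg_smul_mul_lie H (I • P) Pdot_t β
end

section
/- Let χ ∈ M_n(ℂ) be positive semidefinite and suppose the matrix 1 − (4π) • χ is positive definite (here 4π is the real number 4·Real.pi and 1 is the identity matrix). Then the matrix (1 − (4π) • χ)⁻¹ − 1 is positive semidefinite; equivalently, every eigenvalue ε_λ of the inverse dielectric relation ε = (1 − 4πχ)⁻¹ satisfies ε_λ ≥ 1. -/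
/-!
Inversion reverses the Löwner order on invertible positive semidefinite matrices: with `D = C - A`,
applying the resolvent identity twice gives `A⁻¹ - C⁻¹ = C⁻¹ (D + D A⁻¹ D) C⁻¹`, and congruence
preserves positivity. Here `A = 1 - 4πχ` and `C = 1`.
-/

section LoewnerOrder

variable {n R : Type*} [Fintype n] [DecidableEq n] [CommRing R] {A C : Matrix n n R}

theorem inv_sub_inv_eq_inv_mul_add_mul_inv (hA : IsUnit A) (hC : IsUnit C) :
    A⁻¹ - C⁻¹ = C⁻¹ * ((C - A) + (C - A) * A⁻¹ * (C - A)) * C⁻¹ := by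
  have hresolvent : A⁻¹ = C⁻¹ + C⁻¹ * (C - A) * A⁻¹ := by
    have h : C⁻¹ - A⁻¹ = C⁻¹ * (A - C) * A⁻¹ := Matrix.inv_sub_inv (iff_of_true hC hA)
    rw [← neg_sub A C, mul_neg, neg_mul, ← h, neg_sub, add_sub_cancel]
  calc
    A⁻¹ - C⁻¹ = A⁻¹ * (C - A) * C⁻¹ := Matrix.inv_sub_inv (iff_of_true hA hC)
    _ = (C⁻¹ + C⁻¹ * (C - A) * A⁻¹) * (C - A) * C⁻¹ := by rw [← hresolvent]
    _ = C⁻¹ * ((C - A) + (C - A) * A⁻¹ * (C - A)) * C⁻¹ := by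
      simp only [add_mul, mul_add, mul_assoc]

variable [PartialOrder R] [StarRing R] [AddLeftMono R]

theorem posSemidef_inv_sub_inv (hA : A.PosSemidef) (hAC : (C - A).PosSemidef)
    (hA_unit : IsUnit A) (hC_unit : IsUnit C) : (A⁻¹ - C⁻¹).PosSemidef := by
  have hC : C.IsHermitian := by simpa using hA.isHermitian.add hAC.isHermitian
  have hquad : ((C - A) * A⁻¹ * (C - A)).PosSemidef := by
    simpa only [hAC.isHermitian.eq] using hA.inv.conjTranspose_mul_mul_same (C - A)
  rw [inv_sub_inv_eq_inv_mul_add_mul_inv hA_unit hC_unit]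
  simpa only [hC.inv.eq] using (hAC.add hquad).conjTranspose_mul_mul_same C⁻¹

theorem dielectric_ge_one_general {B : Matrix n n R} (hB : B.PosSemidef)
    (hstab : (1 - B).PosSemidef) (hunit : IsUnit (1 - B)) : ((1 - B)⁻¹ - 1).PosSemidef := by
  simpa only [inv_one] using
    posSemidef_inv_sub_inv hstab (by rwa [sub_sub_cancel]) hunit isUnit_one

end LoewnerOrder

open scoped ComplexOrder in
/-- Matrix form of the generalized Landau–Lifshitz theorem: if the susceptibility `χ` is
positive semidefinite and `1 - 4π χ` is positive definite, then the dielectric operator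
`ε = (1 - 4π χ)⁻¹` satisfies `ε ≥ 1`, i.e. `ε - 1` is positive semidefinite. -/
theorem dielectric_ge_one {n : ℕ} (χ : Matrix (Fin n) (Fin n) ℂ)
    (hχ : χ.PosSemidef) (hstab : ((1 : Matrix (Fin n) (Fin n) ℂ) - (4 * Real.pi) • χ).PosDef) :
    (((1 : Matrix (Fin n) (Fin n) ℂ) - (4 * Real.pi) • χ)⁻¹ - 1).PosSemidef := by
  exact dielectric_ge_one_general (hχ.smul (by positivity)) hstab.posSemidef hstab.isUnit
end

section
/- Let ζ ∈ ℂ with 0 < ζ.im, and let f : ℝ → ℂ be differentiable with deriv f continuous, such that there is M with ‖f t‖ ≤ M and ‖deriv f t‖ ≤ M for all t ≥ 0. Then the functions t ↦ exp(i ζ t) · f t and t ↦ exp(i ζ t) · deriv f t are integrable on (0, ∞), and (−i ζ) · ∫_{t ∈ (0,∞)} exp(i ζ t) · f t dt = f 0 + ∫_{t ∈ (0,∞)} exp(i ζ t) · deriv f t dt, where i = Complex.I and exp is the complex exponential. -/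
/-!
Put `a = I * ζ`, so that `a.re < 0`. On the half-line, `f - f 0` is the convolution of the
derivative `f'` with the constant `1`. Multiplication by `t ↦ exp (a * t)` distributes over
convolution, so `exp (a * t) • (f t - f 0)` is the convolution of the integrable functions
`exp (a * t) • f' t` and `exp (a * t)`. It is therefore integrable, and its integral is the product
of theirs, the second of which is `-1 / a`.
-/

section HalfLineLaplace

open Complex MeasureTheory Set
open ContinuousLinearMap (lsmul)

variable {E : Type*} [NormedAddCommGroup E] [NormedSpace ℂ E] {a : ℂ} {f f' g : ℝ → E}

theorem integrableOn_exp_smul_of_norm_le {c M : ℝ} (ha : a.re < 0)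
    (hg : AEStronglyMeasurable g (volume.restrict (Ioi c))) (hM : ∀ t ∈ Ioi c, ‖g t‖ ≤ M) :
    IntegrableOn (fun t : ℝ ↦ cexp (a * t) • g t) (Ioi c) :=
  (integrableOn_exp_mul_complex_Ioi ha c).smul_bdd M hg
    (ae_restrict_of_forall_mem measurableSet_Ioi hM)

theorem intervalIntegrable_of_integrableOn_exp_smul {c x : ℝ} (hx : c ≤ x)
    (hg : IntegrableOn (fun t : ℝ ↦ cexp (a * t) • g t) (Ioi c)) :
    IntervalIntegrable g volume c x := by
  have h_exp : Continuous fun t : ℝ ↦ cexp (-(a * t)) := by fun_prop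
  have h_weighted : IntervalIntegrable (fun t : ℝ ↦ cexp (a * t) • g t) volume c x :=
    (intervalIntegrable_iff_integrableOn_Ioc_of_le hx).2 (hg.mono_set Ioc_subset_Ioi_self)
  simpa only [smul_smul, ← Complex.exp_add, neg_add_cancel, Complex.exp_zero, one_smul] using
    h_weighted.continuousOn_smul h_exp.continuousOn

theorem exp_smul_intervalIntegral_eq_convolution (a : ℂ) (g : ℝ → E) (x : ℝ) :
    cexp (a * x) • ∫ t in 0..x, g t =
      ∫ t in 0..x, (lsmul ℝ ℂ).flip (cexp (a * t) • g t) (cexp (a * (x - t : ℝ))) := by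
  rw [← intervalIntegral.integral_smul]
  refine intervalIntegral.integral_congr fun t _ ↦ ?_
  have h_exp : cexp (a * x) = cexp (a * (x - t : ℝ)) * cexp (a * t) := by
    rw [← Complex.exp_add, ← mul_add, ← ofReal_add, sub_add_cancel]
  simp only [ContinuousLinearMap.flip_apply, ContinuousLinearMap.lsmul_apply, smul_smul, h_exp]

theorem integrableOn_exp_smul_intervalIntegral (ha : a.re < 0)
    (hg : IntegrableOn (fun t : ℝ ↦ cexp (a * t) • g t) (Ioi 0)) :
    IntegrableOn (fun x : ℝ ↦ cexp (a * x) • ∫ t in 0..x, g t) (Ioi 0) := by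
  simp only [exp_smul_intervalIntegral_eq_convolution]
  exact (integrable_indicator_iff measurableSet_Ioi).1
    (integrable_posConvolution hg (integrableOn_exp_mul_complex_Ioi ha 0) (lsmul ℝ ℂ).flip)

theorem integral_exp_smul_intervalIntegral [CompleteSpace E] (ha : a.re < 0)
    (hg : IntegrableOn (fun t : ℝ ↦ cexp (a * t) • g t) (Ioi 0)) :
    ∫ x : ℝ in Ioi 0, cexp (a * x) • ∫ t in 0..x, g t =
      (-a⁻¹) • ∫ t : ℝ in Ioi 0, cexp (a * t) • g t := by
  simp only [exp_smul_intervalIntegral_eq_convolution]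
  rw [integral_posConvolution hg (integrableOn_exp_mul_complex_Ioi ha 0),
    integral_exp_mul_complex_Ioi ha]
  simp [neg_div]

theorem eq_add_intervalIntegral_of_integrableOn_exp_smul [CompleteSpace E] {c x : ℝ} (hx : c ≤ x)
    (hcont : ContinuousWithinAt f (Ici c) c) (hderiv : ∀ t ∈ Ioi c, HasDerivAt f (f' t) t)
    (h_int : IntegrableOn (fun t : ℝ ↦ cexp (a * t) • f' t) (Ioi c)) :
    f x = f c + ∫ t in c..x, f' t := by
  have h_cont : ContinuousOn f (Icc c x) := by
    intro t ht
    rcases ht.1.eq_or_lt with rfl | hct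
    · exact hcont.mono Icc_subset_Ici_self
    · exact (hderiv t hct).continuousAt.continuousWithinAt
  rw [intervalIntegral.integral_eq_sub_of_hasDerivAt_of_le hx h_cont (fun t ht ↦ hderiv t ht.1)
    (intervalIntegrable_of_integrableOn_exp_smul hx h_int), add_sub_cancel]

theorem laplace_transform_integration_by_parts_general [CompleteSpace E] {ζ : ℂ} (hζ : 0 < ζ.im)
    (hcont : ContinuousWithinAt f (Ici 0) 0) (hderiv : ∀ t ∈ Ioi 0, HasDerivAt f (f' t) t)
    (h_int : IntegrableOn (fun t : ℝ ↦ cexp (I * ζ * t) • f' t) (Ioi 0)) :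
    IntegrableOn (fun t : ℝ ↦ cexp (I * ζ * t) • f t) (Ioi 0) ∧
    (-(I * ζ)) • (∫ t : ℝ in Ioi 0, cexp (I * ζ * t) • f t) =
      f 0 + ∫ t : ℝ in Ioi 0, cexp (I * ζ * t) • f' t := by
  have ha : (I * ζ).re < 0 := by simpa using hζ
  have ha₀ : I * ζ ≠ 0 := fun h ↦ by simp [h] at ha
  have h_split : EqOn (fun t : ℝ ↦ cexp (I * ζ * t) • f t)
      (fun t : ℝ ↦ cexp (I * ζ * t) • f 0 + cexp (I * ζ * t) • ∫ s in 0..t, f' s) (Ioi 0) := by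
    intro t ht
    simp only [← smul_add,
      ← eq_add_intervalIntegral_of_integrableOn_exp_smul (le_of_lt ht) hcont hderiv h_int]
  have h_const : IntegrableOn (fun t : ℝ ↦ cexp (I * ζ * t) • f 0) (Ioi 0) :=
    (integrableOn_exp_mul_complex_Ioi ha 0).smul_const (f 0)
  have h_conv := integrableOn_exp_smul_intervalIntegral ha h_int
  refine ⟨(h_const.add h_conv).congr_fun h_split.symm measurableSet_Ioi, ?_⟩
  have h_integral_const :
      (-(I * ζ)) • (∫ t : ℝ in Ioi 0, cexp (I * ζ * t) • f 0) = f 0 := by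
    rw [integral_smul_const, integral_exp_mul_complex_Ioi ha, smul_smul, ofReal_zero, mul_zero,
      Complex.exp_zero, neg_div, neg_mul_neg, mul_one_div_cancel ha₀, one_smul]
  have h_integral_conv :
      (-(I * ζ)) • (∫ t : ℝ in Ioi 0, cexp (I * ζ * t) • ∫ s in 0..t, f' s) =
        ∫ t : ℝ in Ioi 0, cexp (I * ζ * t) • f' t := by
    rw [integral_exp_smul_intervalIntegral ha h_int, smul_smul, neg_mul_neg,
      mul_inv_cancel₀ ha₀, one_smul]
  rw [setIntegral_congr_fun measurableSet_Ioi h_split, integral_add h_const h_conv, smul_add,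
    h_integral_const, h_integral_conv]

end HalfLineLaplace

open Complex MeasureTheory in
/-- Integration by parts for half-line Fourier–Laplace transforms (Eq. (35) of the paper):
for `Im ζ > 0` and a differentiable `f : ℝ → ℂ` with continuous derivative, both `f` and
`deriv f` bounded on `[0,∞)`, the functions `t ↦ e^{iζt} f t` and `t ↦ e^{iζt} f' t` are
integrable on `(0,∞)` and
`(-iζ) ∫_{(0,∞)} e^{iζt} f t dt = f 0 + ∫_{(0,∞)} e^{iζt} f' t dt`. -/
theorem laplace_transform_integration_by_parts (ζ : ℂ) (hζ : 0 < ζ.im)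
    (f : ℝ → ℂ) (hf : Differentiable ℝ f) (hf' : Continuous (deriv f))
    (M : ℝ) (hbound : ∀ t : ℝ, 0 ≤ t → ‖f t‖ ≤ M ∧ ‖deriv f t‖ ≤ M) :
    IntegrableOn (fun t : ℝ => Complex.exp (I * ζ * t) * f t) (Set.Ioi 0) ∧
    IntegrableOn (fun t : ℝ => Complex.exp (I * ζ * t) * deriv f t) (Set.Ioi 0) ∧
    (-(I * ζ)) * (∫ t in Set.Ioi (0:ℝ), Complex.exp (I * ζ * t) * f t)
      = f 0 + ∫ t in Set.Ioi (0:ℝ), Complex.exp (I * ζ * t) * deriv f t := by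
  have h_int : IntegrableOn (fun t : ℝ ↦ cexp (I * ζ * t) * deriv f t) (Set.Ioi 0) :=
    integrableOn_exp_smul_of_norm_le (by simpa using hζ) hf'.aestronglyMeasurable
      fun t ht ↦ (hbound t (le_of_lt ht)).2
  obtain ⟨h_int_f, h_eq⟩ := laplace_transform_integration_by_parts_general hζ
    hf.continuous.continuousWithinAt (fun t _ ↦ (hf t).hasDerivAt) h_int
  exact ⟨h_int_f, h_int, h_eq⟩
end
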